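/- arXiv:0705.3932 — 2 statements merged into one kernel-verified Lean document; each statement's English description precedes it below -/
import Mathlib

section
/- Let q be a prime power (q = p^m with p prime and m ≥ 1). There exist integers s and t with X⁴ − X² + q² = (X² − sX + q)(X² − tX + q) in ℤ[X] if and only if q = 4, in which case {s, t} = {3, −3}. -/
open Polynomial

/-! Comparing the coefficients of `X ^ 3` and `X ^ 2` shows that a factorization amounts to `t = -s`
and `s ^ 2 = 2 * q + 1`. Such an `s` is odd, say `s = ±(2 * k + 1)`, so `q = 2 * (k * (k + 1))`.
The coprime divisors `k` and `k + 1` of a prime power cannot both exceed `1`, hence `k = 1`. -/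

section CommRing

variable {R : Type*} [CommRing R]

theorem X_sq_sub_C_mul_X_add_C_mul_eq (s t c : R) :
    (X ^ 2 - C s * X + C c) * (X ^ 2 - C t * X + C c) =
      X ^ 4 - C (s + t) * X ^ 3 + C (s * t + 2 * c) * X ^ 2 - C (c * (s + t)) * X + C (c ^ 2) := by
  simp only [map_add, map_mul, map_pow, map_ofNat]
  ring

theorem X_pow_four_sub_C_mul_X_sq_add_C_sq_eq_mul_iff {b c s t : R} :
    X ^ 4 - C b * X ^ 2 + C (c ^ 2) = (X ^ 2 - C s * X + C c) * (X ^ 2 - C t * X + C c) ↔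
      t = -s ∧ s ^ 2 = 2 * c + b := by
  rw [X_sq_sub_C_mul_X_add_C_mul_eq]
  constructor
  · intro h
    have coeff_three : s + t = 0 := by
      simpa [coeff_X, coeff_C, coeff_X_pow, -map_add, -neg_add_rev] using congrArg (coeff · 3) h
    have coeff_two : -b = s * t + 2 * c := by
      simpa [coeff_X, coeff_C, coeff_X_pow, -map_add] using congrArg (coeff · 2) h
    exact ⟨by linear_combination coeff_three, by linear_combination s * coeff_three + coeff_two⟩
  · rintro ⟨rfl, hs⟩
    have coeff_two : s * -s + 2 * c = -b := by linear_combination -hs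
    rw [add_neg_cancel, coeff_two]
    simp only [map_zero, map_neg, mul_zero, zero_mul, sub_zero, neg_mul, ← sub_eq_add_neg]

end CommRing

theorem eq_one_or_eq_one_of_coprime_of_dvd_prime_pow {p m a b : ℕ} (hp : p.Prime)
    (hab : a.Coprime b) (ha : a ∣ p ^ m) (hb : b ∣ p ^ m) : a = 1 ∨ b = 1 := by
  obtain ⟨i, -, rfl⟩ := (Nat.dvd_prime_pow hp).1 ha
  obtain ⟨j, -, rfl⟩ := (Nat.dvd_prime_pow hp).1 hb
  by_contra! hne
  have hi : i ≠ 0 := by rintro rfl; exact hne.1 (pow_zero p)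
  have hj : j ≠ 0 := by rintro rfl; exact hne.2 (pow_zero p)
  exact Nat.not_coprime_of_dvd_of_dvd hp.one_lt (dvd_pow_self p hi) (dvd_pow_self p hj) hab

theorem isSquare_two_mul_add_one_iff {n : ℕ} :
    IsSquare (2 * n + 1) ↔ ∃ k, n = 2 * (k * (k + 1)) := by
  constructor
  · rintro ⟨r, hr⟩
    have r_odd : Odd r := (Nat.odd_mul.1 (hr ▸ odd_two_mul_add_one n)).1
    obtain ⟨k, rfl⟩ := r_odd
    exact ⟨k, by linarith⟩
  · rintro ⟨k, rfl⟩
    exact ⟨2 * k + 1, by ring⟩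

theorem isSquare_two_mul_prime_pow_add_one_iff {p m : ℕ} (hp : p.Prime) :
    IsSquare (2 * p ^ m + 1) ↔ p ^ m = 4 := by
  rw [isSquare_two_mul_add_one_iff]
  constructor
  · rintro ⟨k, hk⟩
    have k_dvd : k ∣ p ^ m := ⟨2 * (k + 1), by rw [hk]; ring⟩
    have succ_dvd : k + 1 ∣ p ^ m := ⟨2 * k, by rw [hk]; ring⟩
    have k_ne_zero : k ≠ 0 := ne_zero_of_dvd_ne_zero (pow_ne_zero m hp.ne_zero) k_dvd
    have k_eq_one : k = 1 :=
      (eq_one_or_eq_one_of_coprime_of_dvd_prime_pow hp (by simp) k_dvd succ_dvd).resolve_right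
        (by simpa using k_ne_zero)
    rw [hk, k_eq_one]
  · intro h
    exact ⟨1, h⟩

/-- Let q = p^m be a prime power. There exist integers s and t with
X⁴ − X² + q² = (X² − sX + q)(X² − tX + q) in ℤ[X] if and only if q = 4, in which
case {s, t} = {3, −3}. -/
theorem stmt_12 (p m : ℕ) (hp : p.Prime) (hm : 1 ≤ m) (q : ℕ) (hq : q = p ^ m) :
    ((∃ s t : ℤ,
        (X ^ 4 - X ^ 2 + C ((q : ℤ) ^ 2) : ℤ[X]) =
          (X ^ 2 - C s * X + C (q : ℤ)) * (X ^ 2 - C t * X + C (q : ℤ))) ↔ q = 4) ∧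
    (∀ s t : ℤ,
        (X ^ 4 - X ^ 2 + C ((q : ℤ) ^ 2) : ℤ[X]) =
          (X ^ 2 - C s * X + C (q : ℤ)) * (X ^ 2 - C t * X + C (q : ℤ)) →
        (s = 3 ∧ t = -3) ∨ (s = -3 ∧ t = 3)) := by
  have factorization_iff (s t : ℤ) :
      (X ^ 4 - X ^ 2 + C ((q : ℤ) ^ 2) : ℤ[X]) =
        (X ^ 2 - C s * X + C (q : ℤ)) * (X ^ 2 - C t * X + C (q : ℤ)) ↔
          t = -s ∧ s ^ 2 = 2 * q + 1 := by
    rw [← X_pow_four_sub_C_mul_X_sq_add_C_sq_eq_mul_iff, C_1, one_mul]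
  have eq_four {s : ℤ} (hs : s ^ 2 = 2 * q + 1) : q = 4 := by
    have isSquare_cast : IsSquare ((2 * q + 1 : ℕ) : ℤ) := ⟨s, by push_cast; rw [← hs, sq]⟩
    rw [Int.isSquare_natCast_iff, hq] at isSquare_cast
    exact hq.trans ((isSquare_two_mul_prime_pow_add_one_iff hp).1 isSquare_cast)
  simp only [factorization_iff]
  refine ⟨⟨fun ⟨_, _, _, hs⟩ ↦ eq_four hs, ?_⟩, ?_⟩
  · rintro rfl
    exact ⟨3, -3, by norm_num⟩
  · rintro s t ⟨rfl, hs⟩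
    have sq_eq : s ^ 2 = 3 ^ 2 := by rw [hs, eq_four hs]; norm_num
    rcases sq_eq_sq_iff_eq_or_eq_neg.1 sq_eq with rfl | rfl <;> simp
end

section
/- Let q be a prime power (q = p^m with p prime and m ≥ 1). There exist integers s and t with X⁴ − X³ + qX² − qX + q² = (X² − sX + q)(X² − tX + q) in ℤ[X] if and only if q = 2, in which case {s, t} = {2, −1}. -/
open Polynomial

/-!
Comparing coefficients, the factorization says `s + t = 1` and `s * t = -q`. Then `s` and `t` are
coprime divisors of a prime power, so one of them is a unit of `ℤ`; it cannot be `1`, since the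
other would then vanish.
-/

lemma weil_quartic_eq_mul_iff {R : Type*} [CommRing R] (a b q s t : R) :
    (X ^ 4 - C a * X ^ 3 + C b * X ^ 2 - C (a * q) * X + C (q ^ 2) : R[X]) =
        (X ^ 2 - C s * X + C q) * (X ^ 2 - C t * X + C q) ↔
      s + t = a ∧ s * t + 2 * q = b := by
  have expand : (X ^ 2 - C s * X + C q) * (X ^ 2 - C t * X + C q) =
      X ^ 4 - C (s + t) * X ^ 3 + C (s * t + 2 * q) * X ^ 2 - C ((s + t) * q) * X + C (q ^ 2) := by
    simp only [map_add, map_mul, map_pow, map_ofNat]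
    ring
  rw [expand]
  constructor
  · intro h
    have h_cubic : s + t = a := by
      simpa [coeff_X, -map_add, -map_mul, -neg_add_rev] using congrArg (coeff · 3) h.symm
    have h_quadratic : s * t + 2 * q = b := by
      simpa [coeff_X, -map_add, -map_mul] using congrArg (coeff · 2) h.symm
    exact ⟨h_cubic, h_quadratic⟩
  · rintro ⟨rfl, rfl⟩
    rfl

lemma isUnit_or_isUnit_of_isRelPrime_of_dvd_prime_pow {M : Type*} [CommMonoidWithZero M]
    [IsCancelMulZero M] {p a b : M} {n : ℕ} (hp : Prime p) (hab : IsRelPrime a b)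
    (ha : a ∣ p ^ n) (hb : b ∣ p ^ n) : IsUnit a ∨ IsUnit b := by
  obtain ⟨i, -, hai⟩ := (dvd_prime_pow hp n).1 ha
  obtain ⟨j, -, hbj⟩ := (dvd_prime_pow hp n).1 hb
  rcases le_total i j with hij | hji
  · have hdvd : a ∣ b := hai.dvd.trans ((pow_dvd_pow p hij).trans hbj.dvd')
    exact .inl (hab.isUnit_of_dvd hdvd)
  · have hdvd : b ∣ a := hbj.dvd.trans ((pow_dvd_pow p hji).trans hai.dvd')
    exact .inr (hab.symm.isUnit_of_dvd hdvd)

lemma eq_neg_one_and_eq_two_of_isUnit_of_add_eq_one {s t : ℤ} (hs : IsUnit s) (ht : t ≠ 0)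
    (hst : s + t = 1) : s = -1 ∧ t = 2 := by
  rcases Int.isUnit_iff.1 hs with rfl | rfl <;> lia

lemma eq_two_and_eq_neg_one_or_of_dvd_prime_pow_of_add_eq_one {p s t : ℤ} {n : ℕ} (hp : Prime p)
    (hs : s ∣ p ^ n) (ht : t ∣ p ^ n) (hst : s + t = 1) :
    (s = 2 ∧ t = -1) ∨ (s = -1 ∧ t = 2) := by
  have h_pow : p ^ n ≠ 0 := pow_ne_zero n hp.ne_zero
  have h_coprime : IsCoprime s t := ⟨1, 1, by simpa only [one_mul] using hst⟩
  rcases isUnit_or_isUnit_of_isRelPrime_of_dvd_prime_pow hp h_coprime.isRelPrime hs ht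
    with hs_unit | ht_unit
  · exact .inr (eq_neg_one_and_eq_two_of_isUnit_of_add_eq_one hs_unit
      (ne_zero_of_dvd_ne_zero h_pow ht) hst)
  · exact .inl (eq_neg_one_and_eq_two_of_isUnit_of_add_eq_one ht_unit
      (ne_zero_of_dvd_ne_zero h_pow hs) (add_comm s t ▸ hst)).symm

/-- Let q = p^m be a prime power. There exist integers s and t with
X⁴ − X³ + qX² − qX + q² = (X² − sX + q)(X² − tX + q) in ℤ[X] if and only if
q = 2, in which case {s, t} = {2, −1}. -/
theorem stmt_13 (p m : ℕ) (hp : p.Prime) (hm : 1 ≤ m) (q : ℕ) (hq : q = p ^ m) :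
    ((∃ s t : ℤ,
        (X ^ 4 - X ^ 3 + C (q : ℤ) * X ^ 2 - C (q : ℤ) * X + C ((q : ℤ) ^ 2) : ℤ[X]) =
          (X ^ 2 - C s * X + C (q : ℤ)) * (X ^ 2 - C t * X + C (q : ℤ))) ↔ q = 2) ∧
    (∀ s t : ℤ,
        (X ^ 4 - X ^ 3 + C (q : ℤ) * X ^ 2 - C (q : ℤ) * X + C ((q : ℤ) ^ 2) : ℤ[X]) =
          (X ^ 2 - C s * X + C (q : ℤ)) * (X ^ 2 - C t * X + C (q : ℤ)) →
        (s = 2 ∧ t = -1) ∨ (s = -1 ∧ t = 2)) := by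
  have factorization_iff := weil_quartic_eq_mul_iff 1 (q : ℤ) q
  simp only [C_1, one_mul] at factorization_iff
  simp only [factorization_iff]
  have traces_eq (s t : ℤ) (h : s + t = 1 ∧ s * t + 2 * q = q) :
      (s = 2 ∧ t = -1) ∨ (s = -1 ∧ t = 2) := by
    obtain ⟨h_sum, h_prod⟩ := h
    have h_pow : (p : ℤ) ^ m = -(s * t) := by
      rw [← Nat.cast_pow, ← hq]
      linarith
    have hs : s ∣ (p : ℤ) ^ m := h_pow ▸ (dvd_mul_right s t).neg_right
    have ht : t ∣ (p : ℤ) ^ m := h_pow ▸ (dvd_mul_left t s).neg_right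
    exact eq_two_and_eq_neg_one_or_of_dvd_prime_pow_of_add_eq_one
      (Nat.prime_iff_prime_int.1 hp) hs ht h_sum
  refine ⟨⟨?_, ?_⟩, traces_eq⟩
  · rintro ⟨s, t, h⟩
    rcases traces_eq s t h with ⟨rfl, rfl⟩ | ⟨rfl, rfl⟩ <;> lia
  · rintro rfl
    exact ⟨2, -1, by norm_num⟩
end
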